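/- Fix an admissible control law. For every k ≥ 1 and every i ∈ {1,2,3}, let I¹_i(k) be the σ-algebra generated by the random vectors {y_j(k−1) : j ∈ S_i} together with y(0),…,y(k−2). Then the conditional expectation E[x_i(k) | I¹_i(k)] equals the i-th block of x̂¹(k) = A x̂(k−1|k−2) + B u(k−1) + K¹(k−1)(y(k−1) − C x̂(k−1|k−2)) almost surely; equivalently, the stacked vector of the three conditional expectations equals x̂¹(k) almost surely. -/

import Mathlib

open MeasureTheory ProbabilityTheory Matrix Finset

noncomputable section

/-- Index type for vectors partitioned into three blocks of sizes `v 0, v 1, v 2`. -/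
abbrev idx (v : Fin 3 → ℕ) : Type := Σ i : Fin 3, Fin (v i)

/-- The block-index sets `S1 = {1,3}`, `S2 = {1,2}`, `S3 = {2,3}` (0-based:
`{0,2}, {0,1}, {1,2}`). -/
def Sset : Fin 3 → Finset (Fin 3) := ![{0, 2}, {0, 1}, {1, 2}]

/-- Index type for block rows/columns restricted to the blocks in `s`. -/
abbrev ridx (v : Fin 3 → ℕ) (s : Finset (Fin 3)) : Type := {a : idx v // a.1 ∈ s}

/-- A block-partitioned matrix is block diagonal when all off-diagonal blocks vanish. -/
def BlockDiag {v w : Fin 3 → ℕ} (M : Matrix (idx v) (idx w) ℝ) : Prop :=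
  ∀ a b, a.1 ≠ b.1 → M a b = 0

/-- A block-partitioned matrix has zero blocks in positions `(1,2), (2,3), (3,1)`
(1-based), i.e. in positions `(i, i+1 mod 3)` (0-based). -/
def CyclicSparse {v w : Fin 3 → ℕ} (M : Matrix (idx v) (idx w) ℝ) : Prop :=
  ∀ a b, b.1 = a.1 + 1 → M a b = 0

/-- `[M]_{s t}`: the submatrix of the block rows in `s` and block columns in `t`. -/
def subBB {v w : Fin 3 → ℕ} (M : Matrix (idx v) (idx w) ℝ) (s t : Finset (Fin 3)) :
    Matrix (ridx v s) (ridx w t) ℝ := fun a b => M a.1 b.1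

/-- `[M]_{{1,2,3} t}`: all block rows, block columns restricted to `t`. -/
def subCols {v w : Fin 3 → ℕ} (M : Matrix (idx v) (idx w) ℝ) (t : Finset (Fin 3)) :
    Matrix (idx v) (ridx w t) ℝ := fun a b => M a b.1

/-- `[M]ᵢ`: the `i`-th block row of `M`. -/
def blockRow {v w : Fin 3 → ℕ} (M : Matrix (idx v) (idx w) ℝ) (i : Fin 3) :
    Matrix (Fin (v i)) (idx w) ℝ := fun a b => M ⟨i, a⟩ b

variable {nv qv pv : Fin 3 → ℕ}

/-- The gain `K¹` of the three-player estimator, built from the error covariance `P`: its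
`i`-th block row is supported on the block columns in `Sᵢ`, where it equals
`[A]ᵢ [P]_{{1,2,3} Sᵢ} [C]ᵀ_{SᵢSᵢ} ([C]_{SᵢSᵢ}[P]_{SᵢSᵢ}[C]ᵀ_{SᵢSᵢ} + [V]_{SᵢSᵢ})⁻¹`. -/
def K1mat (A : Matrix (idx nv) (idx nv) ℝ) (C : Matrix (idx pv) (idx nv) ℝ)
    (V : Matrix (idx pv) (idx pv) ℝ) (P : Matrix (idx nv) (idx nv) ℝ) :
    Matrix (idx nv) (idx pv) ℝ := fun a b =>
  if h : b.1 ∈ Sset a.1 then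
    (blockRow A a.1 * subCols P (Sset a.1) * (subBB C (Sset a.1) (Sset a.1))ᵀ *
      (subBB C (Sset a.1) (Sset a.1) * subBB P (Sset a.1) (Sset a.1) *
        (subBB C (Sset a.1) (Sset a.1))ᵀ + subBB V (Sset a.1) (Sset a.1))⁻¹) a.2 ⟨b, h⟩
  else 0

/-- The standard Kalman gain `K = A P Cᵀ (C P Cᵀ + V)⁻¹`. -/
def Kgain (A : Matrix (idx nv) (idx nv) ℝ) (C : Matrix (idx pv) (idx nv) ℝ)
    (V : Matrix (idx pv) (idx pv) ℝ) (P : Matrix (idx nv) (idx nv) ℝ) :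
    Matrix (idx nv) (idx pv) ℝ :=
  A * P * Cᵀ * (C * P * Cᵀ + V)⁻¹

/-- The Kalman error covariance recursion `P(0) = P0`,
`P(k+1) = A P(k) Aᵀ + W − K(k) C P(k) Aᵀ`. -/
def Pmat (A : Matrix (idx nv) (idx nv) ℝ) (C : Matrix (idx pv) (idx nv) ℝ)
    (V : Matrix (idx pv) (idx pv) ℝ) (W P0 : Matrix (idx nv) (idx nv) ℝ) :
    ℕ → Matrix (idx nv) (idx nv) ℝ
  | 0 => P0
  | k + 1 =>
      A * Pmat A C V W P0 k * Aᵀ + W -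
        Kgain A C V (Pmat A C V W P0 k) * (C * Pmat A C V W P0 k * Aᵀ)

variable {Ω : Type} [MeasurableSpace Ω]

/-- The one-step Kalman predictor `x̂(k | k−1)`: `x̂(0 | −1) = 0` and
`x̂(k+1 | k) = A x̂(k | k−1) + B u(k) + K(k)(y(k) − C x̂(k | k−1))`. -/
def xpred (A : Matrix (idx nv) (idx nv) ℝ) (B : Matrix (idx nv) (idx qv) ℝ)
    (C : Matrix (idx pv) (idx nv) ℝ) (V : Matrix (idx pv) (idx pv) ℝ)
    (W P0 : Matrix (idx nv) (idx nv) ℝ)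
    (u : ℕ → Ω → idx qv → ℝ) (y : ℕ → Ω → idx pv → ℝ) :
    ℕ → Ω → idx nv → ℝ
  | 0 => fun _ => 0
  | k + 1 => fun ω =>
      A *ᵥ xpred A B C V W P0 u y k ω + B *ᵥ u k ω +
        Kgain A C V (Pmat A C V W P0 k) *ᵥ (y k ω - C *ᵥ xpred A B C V W P0 u y k ω)

/-- The innovation `ỹ(k) = y(k) − C x̂(k | k−1)`. -/
def innov (A : Matrix (idx nv) (idx nv) ℝ) (B : Matrix (idx nv) (idx qv) ℝ)
    (C : Matrix (idx pv) (idx nv) ℝ) (V : Matrix (idx pv) (idx pv) ℝ)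
    (W P0 : Matrix (idx nv) (idx nv) ℝ)
    (u : ℕ → Ω → idx qv → ℝ) (y : ℕ → Ω → idx pv → ℝ) (k : ℕ) : Ω → idx pv → ℝ :=
  fun ω => y k ω - C *ᵥ xpred A B C V W P0 u y k ω

/-- The improved local estimate
`x̂¹(k) = A x̂(k−1 | k−2) + B u(k−1) + K¹(k−1)(y(k−1) − C x̂(k−1 | k−2))` (for `k ≥ 1`). -/
def xh1 (A : Matrix (idx nv) (idx nv) ℝ) (B : Matrix (idx nv) (idx qv) ℝ)
    (C : Matrix (idx pv) (idx nv) ℝ) (V : Matrix (idx pv) (idx pv) ℝ)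
    (W P0 : Matrix (idx nv) (idx nv) ℝ)
    (u : ℕ → Ω → idx qv → ℝ) (y : ℕ → Ω → idx pv → ℝ) (k : ℕ) : Ω → idx nv → ℝ :=
  fun ω =>
    A *ᵥ xpred A B C V W P0 u y (k - 1) ω + B *ᵥ u (k - 1) ω +
      K1mat A C V (Pmat A C V W P0 (k - 1)) *ᵥ innov A B C V W P0 u y (k - 1) ω

/-- A random vector is (jointly) Gaussian when every linear functional of it has a
(possibly degenerate) one-dimensional Gaussian distribution. -/
def IsGaussianVec {d : Type} [Fintype d] (μ : Measure Ω) (X : Ω → d → ℝ) : Prop :=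
  ∀ l : d → ℝ, ∃ m s, μ.map (fun ω => ∑ i, l i * X ω i) = gaussianReal m s

/-- The standing noise assumptions: `x(0), w(0),…,w(N−1), v(0),…,v(N−1)` are measurable,
mutually independent and Gaussian with mean zero and covariances `P0`, `W`, `V`. -/
def NoiseOK (μ : Measure Ω) (N : ℕ) (P0 W : Matrix (idx nv) (idx nv) ℝ)
    (V : Matrix (idx pv) (idx pv) ℝ) (x0 : Ω → idx nv → ℝ)
    (w : ℕ → Ω → idx nv → ℝ) (v : ℕ → Ω → idx pv → ℝ) : Prop :=
  Measurable x0 ∧ (∀ k, Measurable (w k)) ∧ (∀ k, Measurable (v k)) ∧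
  iIndep (fun i : Unit ⊕ Fin N ⊕ Fin N =>
    Sum.elim (fun _ => MeasurableSpace.comap x0 inferInstance)
      (Sum.elim (fun k : Fin N => MeasurableSpace.comap (w ↑k) inferInstance)
        (fun k : Fin N => MeasurableSpace.comap (v ↑k) inferInstance)) i) μ ∧
  IsGaussianVec μ x0 ∧ (∀ k < N, IsGaussianVec μ (w k)) ∧ (∀ k < N, IsGaussianVec μ (v k)) ∧
  (∀ i, ∫ ω, x0 ω i ∂μ = 0) ∧ (∀ i j, ∫ ω, x0 ω i * x0 ω j ∂μ = P0 i j) ∧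
  (∀ k < N, ∀ i, ∫ ω, w k ω i ∂μ = 0) ∧
  (∀ k < N, ∀ i j, ∫ ω, w k ω i * w k ω j ∂μ = W i j) ∧
  (∀ k < N, ∀ i, ∫ ω, v k ω i ∂μ = 0) ∧
  (∀ k < N, ∀ i j, ∫ ω, v k ω i * v k ω j ∂μ = V i j)

/-- The closed-loop equations induced by the admissible control law `(F, G, Φ)`:
`x(k+1) = A x(k) + B u(k) + w(k)`, `y(k) = C x(k) + v(k)`, and
`u(k) = F(k) y(k) + G(k) y(k−1) + ∑_{j ≤ k−2} Φ(k,j) y(j)` (absent terms for `k = 0`). -/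
def ClosedLoop (A : Matrix (idx nv) (idx nv) ℝ) (B : Matrix (idx nv) (idx qv) ℝ)
    (C : Matrix (idx pv) (idx nv) ℝ) (x0 : Ω → idx nv → ℝ)
    (w : ℕ → Ω → idx nv → ℝ) (v : ℕ → Ω → idx pv → ℝ)
    (F G : ℕ → Matrix (idx qv) (idx pv) ℝ) (Φ : ℕ → ℕ → Matrix (idx qv) (idx pv) ℝ)
    (x : ℕ → Ω → idx nv → ℝ) (u : ℕ → Ω → idx qv → ℝ) (y : ℕ → Ω → idx pv → ℝ) : Prop :=
  (∀ ω, x 0 ω = x0 ω) ∧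
  (∀ k, ∀ ω, x (k + 1) ω = A *ᵥ x k ω + B *ᵥ u k ω + w k ω) ∧
  (∀ k, ∀ ω, y k ω = C *ᵥ x k ω + v k ω) ∧
  (∀ k, ∀ ω, u k ω = F k *ᵥ y k ω +
    (if 1 ≤ k then G k *ᵥ y (k - 1) ω else 0) +
    ∑ j ∈ Finset.range (k - 1), Φ k j *ᵥ y j ω)

/-- Sparsity constraints of the three-player information structure: `F(k)` block diagonal
and `G(k)` with zero blocks at `(1,2), (2,3), (3,1)`. -/
def Admissible (F G : ℕ → Matrix (idx qv) (idx pv) ℝ) : Prop :=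
  (∀ k, BlockDiag (F k)) ∧ (∀ k, CyclicSparse (G k))

/-- `σ(y(0), …, y(k−2))`: the common two-step-delayed information. -/
def pastSigma (y : ℕ → Ω → idx pv → ℝ) (k : ℕ) : MeasurableSpace Ω :=
  ⨆ j ∈ Finset.range (k - 1), MeasurableSpace.comap (y j) inferInstance

/-- `I¹ᵢ(k)`: the σ-algebra generated by `{yⱼ(k−1) : j ∈ Sᵢ}` together with
`y(0), …, y(k−2)`. -/
def localSigma (y : ℕ → Ω → idx pv → ℝ) (i : Fin 3) (k : ℕ) : MeasurableSpace Ω :=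
  (⨆ j ∈ Sset i,
    MeasurableSpace.comap (fun ω (b : Fin (pv j)) => y (k - 1) ω ⟨j, b⟩) inferInstance) ⊔
    pastSigma y k

/-!
The control enters the state and the Kalman predictor in the same way, so the prediction errors and
the innovations are linear in the noise, whatever the control law. Everything therefore lives in
one Gaussian space, where a conditional expectation is the linear estimate whose error is
uncorrelated with the observations.

The observations `y(0), …, y(k-1)` and `yⱼ(k)`, `j ∈ Sᵢ`, are linear combinations of the past
innovations and of the blocks `j ∈ Sᵢ` of the innovation at time `k`. The error of the local
estimate is uncorrelated with the former because the innovations are mutually uncorrelated, and with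
the latter because `K¹` solves the normal equations restricted to the block columns in `Sᵢ`.
-/

section LinearSpaces

variable {R Ω d d' : Type*} [Ring R]

/-- All coordinates of the random vector `X` lie in the space `H` of random variables. The argument
uses it for Gaussian spaces, for the variables uncorrelated with a given vector, and for the
variables measurable with respect to a σ-algebra. -/
def HasCoordsIn (H : Submodule R (Ω → R)) (X : Ω → d → R) : Prop :=
  ∀ i, (fun ω => X ω i) ∈ H

namespace HasCoordsIn

variable {H : Submodule R (Ω → R)} {X Y : Ω → d → R}

theorem zero : HasCoordsIn H fun _ => (0 : d → R) := fun _ => H.zero_mem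

theorem add (hX : HasCoordsIn H X) (hY : HasCoordsIn H Y) :
    HasCoordsIn H fun ω => X ω + Y ω :=
  fun i => H.add_mem (hX i) (hY i)

theorem sub (hX : HasCoordsIn H X) (hY : HasCoordsIn H Y) :
    HasCoordsIn H fun ω => X ω - Y ω :=
  fun i => H.sub_mem (hX i) (hY i)

theorem sum {ι : Type*} {s : Finset ι} {X : ι → Ω → d → R} (hX : ∀ j ∈ s, HasCoordsIn H (X j)) :
    HasCoordsIn H fun ω => ∑ j ∈ s, X j ω := fun i => by
  simpa only [Finset.sum_apply, Finset.sum_fn] using H.sum_mem fun j hj => hX j hj i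

theorem mulVec_apply [Fintype d] {M : Matrix d' d R} {a : d'}
    (hX : ∀ c, M a c ≠ 0 → (fun ω => X ω c) ∈ H) : (fun ω => (M *ᵥ X ω) a) ∈ H := by
  have hterm : ∀ c ∈ Finset.univ, (fun ω => M a c * X ω c) ∈ H := fun c _ => by
    by_cases hc : M a c = 0
    · simpa only [hc, zero_mul] using! H.zero_mem
    · exact H.smul_mem (M a c) (hX c hc)
  simpa only [mulVec, dotProduct, Finset.sum_fn] using H.sum_mem hterm

theorem mulVec [Fintype d] (M : Matrix d' d R) (hX : HasCoordsIn H X) :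
    HasCoordsIn H fun ω => M *ᵥ X ω :=
  fun _ => mulVec_apply fun c _ => hX c

end HasCoordsIn

/-- The space of real random variables that are measurable with respect to the σ-algebra `m`. -/
def measurableFunctions (m : MeasurableSpace Ω) : Submodule ℝ (Ω → ℝ) where
  carrier := {f | Measurable[m] f}
  add_mem' hf hg := hf.add hg
  zero_mem' := measurable_zero
  smul_mem' c _ hf := hf.const_smul c

end LinearSpaces

section CrossCovariance

variable {Ω d d₁ d₂ : Type*} [MeasurableSpace Ω] {μ : Measure Ω}

/-- The cross-covariance matrix `E[(X - E X)(Y - E Y)ᵀ]` of two random vectors. -/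
def crossCov (μ : Measure Ω) (X : Ω → d₁ → ℝ) (Y : Ω → d₂ → ℝ) : Matrix d₁ d₂ ℝ :=
  fun i j => cov[fun ω => X ω i, fun ω => Y ω j; μ]

theorem crossCov_transpose (X : Ω → d₁ → ℝ) (Y : Ω → d₂ → ℝ) :
    (crossCov μ X Y)ᵀ = crossCov μ Y X :=
  Matrix.ext fun _ _ => covariance_comm _ _

theorem crossCov_eq_zero_symm {X : Ω → d₁ → ℝ} {Y : Ω → d₂ → ℝ} (h : crossCov μ X Y = 0) :
    crossCov μ Y X = 0 := by
  rw [← crossCov_transpose, h, transpose_zero]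

theorem memLp_mulVec [Fintype d] [Fintype d₁] {p : ENNReal} (M : Matrix d₁ d ℝ) {X : Ω → d → ℝ}
    (hX : MemLp X p μ) : MemLp (fun ω => M *ᵥ X ω) p μ :=
  M.mulVecLin.toContinuousLinearMap.lipschitz.comp_memLp (map_zero _) hX

section Bilinear

variable [IsFiniteMeasure μ] [Fintype d₁] [Fintype d₂] {X X' : Ω → d₁ → ℝ} {Y : Ω → d₂ → ℝ}

theorem crossCov_add_left (hX : MemLp X 2 μ) (hX' : MemLp X' 2 μ) (hY : MemLp Y 2 μ) :
    crossCov μ (fun ω => X ω + X' ω) Y = crossCov μ X Y + crossCov μ X' Y :=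
  Matrix.ext fun i j =>
    covariance_add_left (memLp_pi_iff.1 hX i) (memLp_pi_iff.1 hX' i) (memLp_pi_iff.1 hY j)

theorem crossCov_sub_left (hX : MemLp X 2 μ) (hX' : MemLp X' 2 μ) (hY : MemLp Y 2 μ) :
    crossCov μ (fun ω => X ω - X' ω) Y = crossCov μ X Y - crossCov μ X' Y :=
  Matrix.ext fun i j =>
    covariance_sub_left (memLp_pi_iff.1 hX i) (memLp_pi_iff.1 hX' i) (memLp_pi_iff.1 hY j)

theorem crossCov_mulVec_left (M : Matrix d d₁ ℝ) (hX : MemLp X 2 μ) (hY : MemLp Y 2 μ) :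
    crossCov μ (fun ω => M *ᵥ X ω) Y = M * crossCov μ X Y := by
  ext i j
  simp only [crossCov, mulVec, dotProduct, mul_apply]
  rw [covariance_fun_sum_left (fun c => (memLp_pi_iff.1 hX c).const_mul (M i c))
    (memLp_pi_iff.1 hY j)]
  simp only [covariance_const_mul_left]

theorem crossCov_mulVec_right (M : Matrix d d₂ ℝ) (hX : MemLp X 2 μ) (hY : MemLp Y 2 μ) :
    crossCov μ X (fun ω => M *ᵥ Y ω) = crossCov μ X Y * Mᵀ := by
  rw [← crossCov_transpose, crossCov_mulVec_left M hY hX, transpose_mul, crossCov_transpose]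

theorem crossCov_posSemidef (hX : MemLp X 2 μ) : (crossCov μ X X).PosSemidef := by
  refine .of_dotProduct_mulVec_nonneg ?_ fun c => ?_
  · rw [IsHermitian, conjTranspose_eq_transpose_of_trivial, crossCov_transpose]
  · let M : Matrix Unit d₁ ℝ := Matrix.of fun _ => c
    have hvar : star c ⬝ᵥ crossCov μ X X *ᵥ c =
        crossCov μ (fun ω => M *ᵥ X ω) (fun ω => M *ᵥ X ω) () () := by
      rw [crossCov_mulVec_left M hX (memLp_mulVec M hX), crossCov_mulVec_right M hX hX]
      simp [M, mul_apply, dotProduct, mulVec]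
    rw [hvar]
    exact integral_nonneg fun _ => mul_self_nonneg _

/-- The space of square-integrable random variables that are uncorrelated with every coordinate
of the random vector `Z`. -/
def uncorrelatedSpace {Z : Ω → d₂ → ℝ} (hZ : MemLp Z 2 μ) : Submodule ℝ (Ω → ℝ) where
  carrier := {f | MemLp f 2 μ ∧ ∀ j, cov[f, fun ω => Z ω j; μ] = 0}
  add_mem' hf hg := ⟨hf.1.add hg.1, fun j => by
    rw [covariance_add_left hf.1 hg.1 (memLp_pi_iff.1 hZ j), hf.2, hg.2, add_zero]⟩
  zero_mem' := ⟨MemLp.zero, fun _ => covariance_zero_left⟩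
  smul_mem' c _ hf := ⟨hf.1.const_smul c, fun j => by rw [covariance_smul_left, hf.2, mul_zero]⟩

theorem hasCoordsIn_uncorrelatedSpace_iff {Z : Ω → d₂ → ℝ} (hZ : MemLp Z 2 μ) :
    HasCoordsIn (uncorrelatedSpace hZ) X ↔ MemLp X 2 μ ∧ crossCov μ X Z = 0 :=
  forall_and.trans (and_congr memLp_pi_iff.symm Matrix.ext_iff)

end Bilinear

end CrossCovariance

section FilterStep

variable {Ω d d₁ d₂ d₃ : Type*} [Fintype d]

/-- The part `C e + v` of an observation that a predictor with error `e` does not explain, where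
`v` is the measurement noise. -/
def outputError (C : Matrix d₂ d ℝ) (e : Ω → d → ℝ) (v : Ω → d₂ → ℝ) : Ω → d₂ → ℝ :=
  fun ω => C *ᵥ e ω + v ω

/-- The error `A e + w - K z` of the next prediction, when the current prediction has error `e`,
the process noise is `w`, and the output error `z` is fed back with gain `K`. -/
def nextError [Fintype d₂] (A : Matrix d₁ d ℝ) (K : Matrix d₁ d₂ ℝ) (e : Ω → d → ℝ)
    (w : Ω → d₁ → ℝ) (z : Ω → d₂ → ℝ) : Ω → d₁ → ℝ :=
  fun ω => A *ᵥ e ω + w ω - K *ᵥ z ω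

theorem HasCoordsIn.outputError {H : Submodule ℝ (Ω → ℝ)} {C : Matrix d₂ d ℝ} {e : Ω → d → ℝ}
    {v : Ω → d₂ → ℝ} (he : HasCoordsIn H e) (hv : HasCoordsIn H v) :
    HasCoordsIn H (outputError C e v) :=
  (he.mulVec C).add hv

theorem HasCoordsIn.nextError [Fintype d₂] {H : Submodule ℝ (Ω → ℝ)} {A : Matrix d₁ d ℝ}
    {K : Matrix d₁ d₂ ℝ} {e : Ω → d → ℝ} {w : Ω → d₁ → ℝ} {z : Ω → d₂ → ℝ}
    (he : HasCoordsIn H e) (hw : HasCoordsIn H w) (hz : HasCoordsIn H z) :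
    HasCoordsIn H (nextError A K e w z) :=
  ((he.mulVec A).add hw).sub (hz.mulVec K)

section CrossCov

variable [MeasurableSpace Ω] {μ : Measure Ω} [IsFiniteMeasure μ] [Fintype d₁] [Fintype d₂]
  [Fintype d₃] {e : Ω → d → ℝ} {w : Ω → d₁ → ℝ} {v z : Ω → d₂ → ℝ} {X : Ω → d₃ → ℝ}

theorem crossCov_outputError_left (C : Matrix d₂ d ℝ) (he : MemLp e 2 μ) (hv : MemLp v 2 μ)
    (hX : MemLp X 2 μ) :
    crossCov μ (outputError C e v) X = C * crossCov μ e X + crossCov μ v X :=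
  (crossCov_add_left (memLp_mulVec C he) hv hX).trans (by rw [crossCov_mulVec_left C he hX])

theorem crossCov_outputError_right (C : Matrix d₂ d ℝ) (he : MemLp e 2 μ) (hv : MemLp v 2 μ)
    (hX : MemLp X 2 μ) :
    crossCov μ X (outputError C e v) = crossCov μ X e * Cᵀ + crossCov μ X v := by
  simp only [← crossCov_transpose _ X, crossCov_outputError_left C he hv hX, transpose_add,
    transpose_mul]

theorem crossCov_nextError_left (A : Matrix d₁ d ℝ) (K : Matrix d₁ d₂ ℝ) (he : MemLp e 2 μ)
    (hw : MemLp w 2 μ) (hz : MemLp z 2 μ) (hX : MemLp X 2 μ) :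
    crossCov μ (nextError A K e w z) X =
      A * crossCov μ e X + crossCov μ w X - K * crossCov μ z X := by
  have hAe := memLp_mulVec A he
  rw [← crossCov_mulVec_left A he hX, ← crossCov_mulVec_left K hz hX,
    ← crossCov_add_left hAe hw hX]
  exact crossCov_sub_left (hAe.add hw) (memLp_mulVec K hz) hX

theorem crossCov_nextError_right (A : Matrix d₁ d ℝ) (K : Matrix d₁ d₂ ℝ) (he : MemLp e 2 μ)
    (hw : MemLp w 2 μ) (hz : MemLp z 2 μ) (hX : MemLp X 2 μ) :
    crossCov μ X (nextError A K e w z) =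
      crossCov μ X e * Aᵀ + crossCov μ X w - crossCov μ X z * Kᵀ := by
  simp only [← crossCov_transpose _ X, crossCov_nextError_left A K he hw hz hX, transpose_add,
    transpose_sub, transpose_mul]

end CrossCov

variable [MeasurableSpace Ω] {μ : Measure Ω}

/-- The second-order data of one filter step: a prediction error `e`, a process noise `w` and a
measurement noise `v` that are square-integrable and pairwise uncorrelated, with covariances
`P`, `W` and `V`. -/
structure IsFilterStep [Fintype d₁] [Fintype d₂] (μ : Measure Ω) (P : Matrix d d ℝ)
    (W : Matrix d₁ d₁ ℝ) (V : Matrix d₂ d₂ ℝ) (e : Ω → d → ℝ) (w : Ω → d₁ → ℝ)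
    (v : Ω → d₂ → ℝ) : Prop where
  memLp_error : MemLp e 2 μ
  memLp_process : MemLp w 2 μ
  memLp_measurement : MemLp v 2 μ
  cov_error : crossCov μ e e = P
  cov_process : crossCov μ w w = W
  cov_measurement : crossCov μ v v = V
  cov_error_process : crossCov μ e w = 0
  cov_error_measurement : crossCov μ e v = 0
  cov_process_measurement : crossCov μ w v = 0

namespace IsFilterStep

variable [Fintype d₁] [Fintype d₂] {P : Matrix d d ℝ} {W : Matrix d₁ d₁ ℝ}
  {V : Matrix d₂ d₂ ℝ} {e : Ω → d → ℝ} {w : Ω → d₁ → ℝ} {v : Ω → d₂ → ℝ}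

theorem memLp_outputError (h : IsFilterStep μ P W V e w v) (C : Matrix d₂ d ℝ) :
    MemLp (outputError C e v) 2 μ :=
  (memLp_mulVec C h.memLp_error).add h.memLp_measurement

theorem memLp_nextError (h : IsFilterStep μ P W V e w v) (A : Matrix d₁ d ℝ)
    (C : Matrix d₂ d ℝ) (K : Matrix d₁ d₂ ℝ) :
    MemLp (nextError A K e w (outputError C e v)) 2 μ :=
  ((memLp_mulVec A h.memLp_error).add h.memLp_process).sub
    (memLp_mulVec K (h.memLp_outputError C))

variable [IsFiniteMeasure μ]

theorem crossCov_error_outputError (h : IsFilterStep μ P W V e w v) (C : Matrix d₂ d ℝ) :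
    crossCov μ e (outputError C e v) = P * Cᵀ := by
  rw [crossCov_outputError_right C h.memLp_error h.memLp_measurement h.memLp_error, h.cov_error,
    h.cov_error_measurement, add_zero]

theorem crossCov_outputError_error (h : IsFilterStep μ P W V e w v) (C : Matrix d₂ d ℝ) :
    crossCov μ (outputError C e v) e = C * P := by
  rw [crossCov_outputError_left C h.memLp_error h.memLp_measurement h.memLp_error, h.cov_error,
    crossCov_eq_zero_symm h.cov_error_measurement, add_zero]

theorem crossCov_outputError_process (h : IsFilterStep μ P W V e w v) (C : Matrix d₂ d ℝ) :
    crossCov μ (outputError C e v) w = 0 := by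
  rw [crossCov_outputError_left C h.memLp_error h.memLp_measurement h.memLp_process,
    h.cov_error_process, crossCov_eq_zero_symm h.cov_process_measurement, Matrix.mul_zero,
    add_zero]

theorem crossCov_measurement_outputError (h : IsFilterStep μ P W V e w v) (C : Matrix d₂ d ℝ) :
    crossCov μ v (outputError C e v) = V := by
  rw [crossCov_outputError_right C h.memLp_error h.memLp_measurement h.memLp_measurement,
    crossCov_eq_zero_symm h.cov_error_measurement, h.cov_measurement, Matrix.zero_mul, zero_add]

theorem crossCov_outputError (h : IsFilterStep μ P W V e w v) (C : Matrix d₂ d ℝ) :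
    crossCov μ (outputError C e v) (outputError C e v) = C * P * Cᵀ + V := by
  rw [crossCov_outputError_left C h.memLp_error h.memLp_measurement (h.memLp_outputError C),
    h.crossCov_error_outputError, h.crossCov_measurement_outputError, Matrix.mul_assoc]

theorem posDef_cov_outputError (h : IsFilterStep μ P W V e w v) (C : Matrix d₂ d ℝ)
    (hV : V.PosDef) : (C * P * Cᵀ + V).PosDef := by
  have hP : P.PosSemidef := h.cov_error ▸ crossCov_posSemidef h.memLp_error
  rw [← conjTranspose_eq_transpose_of_trivial C]
  exact PosDef.posSemidef_add (hP.mul_mul_conjTranspose_same C) hV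

theorem crossCov_nextError_outputError (h : IsFilterStep μ P W V e w v) (A : Matrix d₁ d ℝ)
    (C : Matrix d₂ d ℝ) (K : Matrix d₁ d₂ ℝ) :
    crossCov μ (nextError A K e w (outputError C e v)) (outputError C e v) =
      A * P * Cᵀ - K * (C * P * Cᵀ + V) := by
  have hz := h.memLp_outputError C
  rw [crossCov_nextError_left A K h.memLp_error h.memLp_process hz hz,
    h.crossCov_error_outputError, crossCov_eq_zero_symm (h.crossCov_outputError_process C),
    h.crossCov_outputError, add_zero, ← Matrix.mul_assoc A]

theorem crossCov_nextError_outputError_eq_zero (h : IsFilterStep μ P W V e w v)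
    (A : Matrix d₁ d ℝ) (C : Matrix d₂ d ℝ) (hV : V.PosDef) [DecidableEq d₂] :
    crossCov μ (nextError A (A * P * Cᵀ * (C * P * Cᵀ + V)⁻¹) e w (outputError C e v))
      (outputError C e v) = 0 := by
  have hdet : IsUnit (C * P * Cᵀ + V).det :=
    (isUnit_iff_isUnit_det _).1 (h.posDef_cov_outputError C hV).isUnit
  rw [h.crossCov_nextError_outputError, nonsing_inv_mul_cancel_right _ _ hdet, sub_self]

theorem crossCov_nextError (h : IsFilterStep μ P W V e w v) (A : Matrix d₁ d ℝ)
    (C : Matrix d₂ d ℝ) (K : Matrix d₁ d₂ ℝ)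
    (hK : crossCov μ (nextError A K e w (outputError C e v)) (outputError C e v) = 0) :
    crossCov μ (nextError A K e w (outputError C e v)) (nextError A K e w (outputError C e v)) =
      A * P * Aᵀ + W - K * (C * P * Aᵀ) := by
  have hz := h.memLp_outputError C
  have herror : crossCov μ (nextError A K e w (outputError C e v)) e = A * P - K * (C * P) := by
    rw [crossCov_nextError_left A K h.memLp_error h.memLp_process hz h.memLp_error, h.cov_error,
      crossCov_eq_zero_symm h.cov_error_process, h.crossCov_outputError_error, add_zero]
  have hprocess : crossCov μ (nextError A K e w (outputError C e v)) w = W := by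
    rw [crossCov_nextError_left A K h.memLp_error h.memLp_process hz h.memLp_process,
      h.cov_error_process, h.cov_process, h.crossCov_outputError_process, Matrix.mul_zero,
      Matrix.mul_zero, zero_add, sub_zero]
  rw [crossCov_nextError_right A K h.memLp_error h.memLp_process hz (h.memLp_nextError A C K),
    herror, hprocess, hK, Matrix.zero_mul, sub_zero, Matrix.sub_mul, Matrix.mul_assoc K,
    sub_add_eq_add_sub]

end IsFilterStep

end FilterStep

section GaussianSpaces

variable {Ω : Type*} {mΩ : MeasurableSpace Ω} {μ : Measure Ω} {H : Submodule ℝ (Ω → ℝ)}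

/-- A linear space of centred, jointly Gaussian random variables. Its elements are functions rather
than almost sure classes, so that σ-algebras generated by them make sense. -/
structure IsCenteredGaussianSpace (μ : Measure Ω) (H : Submodule ℝ (Ω → ℝ)) : Prop where
  isGaussianProcess : IsGaussianProcess (fun f : H => f.1) μ
  measurable : ∀ f ∈ H, Measurable f
  integral_eq_zero : ∀ f ∈ H, ∫ ω, f ω ∂μ = 0

theorem isCenteredGaussianSpace_span {T : Type*} {X : T → Ω → ℝ} (hX : IsGaussianProcess X μ)
    (hmeas : ∀ t, Measurable (X t)) (hmean : ∀ t, ∫ ω, X t ω ∂μ = 0) :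
    IsCenteredGaussianSpace μ (Submodule.span ℝ (Set.range X)) where
  isGaussianProcess := hX.of_isGaussianProcess fun ⟨f, hf⟩ => by
    obtain ⟨c, rfl⟩ := Finsupp.mem_span_range_iff_exists_finsupp.1 hf
    refine ⟨c.support, ∑ t, c t.1 • ContinuousLinearMap.proj t, fun ω => ?_⟩
    simp [Finsupp.sum, ← Finset.sum_coe_sort c.support]
  measurable f hf :=
    Submodule.span_le (p := measurableFunctions mΩ).2 (Set.range_subset_iff.2 hmeas) hf
  integral_eq_zero f hf := by
    obtain ⟨c, rfl⟩ := Finsupp.mem_span_range_iff_exists_finsupp.1 hf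
    simp only [Finsupp.sum, Finset.sum_apply, Pi.smul_apply, smul_eq_mul]
    rw [integral_finsetSum _ fun t _ => (hX.hasGaussianLaw_eval t).integrable.const_mul _]
    simp only [integral_const_mul, hmean, mul_zero, Finset.sum_const_zero]

theorem isGaussianProcess_sigma_of_iIndepFun {ι : Type*} [Finite ι] {d : ι → Type*}
    [∀ i, Finite (d i)] {X : ∀ i, Ω → d i → ℝ} (hX : ∀ i, HasGaussianLaw (X i) μ)
    (hindep : iIndepFun X μ) :
    IsGaussianProcess (fun (p : Σ i, d i) ω => X p.1 ω p.2) μ where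
  hasGaussianLaw I := by
    have := Fintype.ofFinite ι
    have := fun i => Fintype.ofFinite (d i)
    let L : (∀ i, d i → ℝ) →L[ℝ] I → ℝ :=
      .pi fun p => .comp (.proj p.1.2) (.proj (φ := fun i => d i → ℝ) p.1.1)
    exact (iIndepFun.hasGaussianLaw hX hindep).map_fun L

namespace IsCenteredGaussianSpace

theorem memLp (hH : IsCenteredGaussianSpace μ H) {f : Ω → ℝ} (hf : f ∈ H) : MemLp f 2 μ :=
  (hH.isGaussianProcess.hasGaussianLaw_eval ⟨f, hf⟩).memLp_two

theorem memLp_of_hasCoordsIn (hH : IsCenteredGaussianSpace μ H) {d : Type*} [Fintype d]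
    {X : Ω → d → ℝ} (hX : HasCoordsIn H X) : MemLp X 2 μ :=
  memLp_pi_iff.2 fun i => hH.memLp (hX i)

theorem indepFun_of_covariance_eq_zero (hH : IsCenteredGaussianSpace μ H) {κ : Type*}
    {f : Ω → ℝ} {Z : κ → Ω → ℝ} (hf : f ∈ H) (hZ : ∀ k, Z k ∈ H)
    (hcov : ∀ k, cov[f, Z k; μ] = 0) : IndepFun f (fun ω k => Z k ω) μ := by
  have hjoint : IsGaussianProcess (Sum.elim (fun _ : Unit => f) Z) μ := by
    convert! hH.isGaussianProcess.comp_right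
      (Sum.elim (fun _ : Unit => (⟨f, hf⟩ : H)) fun k => ⟨Z k, hZ k⟩) using 1
    ext (_ | _) <;> rfl
  have hindep := hjoint.indepFun_of_covariance_eq_zero
    (fun _ => (hH.measurable f hf).aemeasurable) (fun k => (hH.measurable _ (hZ k)).aemeasurable)
    fun _ => hcov
  exact hindep.comp (measurable_pi_apply ()) measurable_id

/-- The conditional expectation is the linear estimate: the error `ξ - η` is uncorrelated with,
hence independent of, all the variables generating the conditioning σ-algebra. -/
theorem condExp_ae_eq (hH : IsCenteredGaussianSpace μ H) {κ : Type*}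
    {ξ η : Ω → ℝ} {Z : κ → Ω → ℝ} (hξ : ξ ∈ H) (hη : η ∈ H) (hZ : ∀ k, Z k ∈ H)
    (hηm : Measurable[.comap (fun ω k => Z k ω) inferInstance] η)
    (hcov : ∀ k, cov[ξ - η, Z k; μ] = 0) :
    μ[ξ | .comap (fun ω k => Z k ω) inferInstance] =ᵐ[μ] η := by
  have := hH.isGaussianProcess.isProbabilityMeasure
  have hsub : ξ - η ∈ H := H.sub_mem hξ hη
  have hZmeas : Measurable fun ω k => Z k ω :=
    measurable_pi_iff.2 fun k => hH.measurable _ (hZ k)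
  set m := MeasurableSpace.comap (fun ω k => Z k ω) inferInstance
  have hmΩ : m ≤ mΩ := hZmeas.comap_le
  have hindep : Indep (MeasurableSpace.comap (ξ - η) inferInstance) m μ :=
    (IndepFun_iff_Indep _ _ _).1 (hH.indepFun_of_covariance_eq_zero hsub hZ hcov)
  have herror : μ[ξ - η | m] =ᵐ[μ] 0 := by
    have := condExp_indep_eq (hH.measurable _ hsub).comap_le hmΩ
      (comap_measurable (ξ - η)).stronglyMeasurable hindep
    rwa [hH.integral_eq_zero _ hsub] at this
  have hηint : Integrable η μ := (hH.memLp hη).integrable (by norm_num)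
  have hξint : Integrable ξ μ := (hH.memLp hξ).integrable (by norm_num)
  have hself : μ[η | m] = η := condExp_of_stronglyMeasurable hmΩ hηm.stronglyMeasurable hηint
  filter_upwards [condExp_sub hξint hηint m, herror] with ω hsubω hzeroω
  rw [hsubω, Pi.sub_apply, hself, Pi.zero_apply] at hzeroω
  exact sub_eq_zero.1 hzeroω

end IsCenteredGaussianSpace

end GaussianSpaces

section LocalGain

variable {v : Fin 3 → ℕ}

theorem sum_eq_sum_ridx {s : Finset (Fin 3)} {f : idx v → ℝ} (hf : ∀ c, c.1 ∉ s → f c = 0) :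
    ∑ c, f c = ∑ c : ridx v s, f c.1 :=
  Finset.sum_congr_set {c : idx v | c.1 ∈ s} f (fun c => f c.1) (fun _ _ => rfl) hf

namespace BlockDiag

variable {C : Matrix (idx pv) (idx nv) ℝ}

theorem fst_eq_of_apply_ne_zero (hC : BlockDiag C) {b : idx pv} {c : idx nv} (h : C b c ≠ 0) :
    b.1 = c.1 :=
  not_imp_comm.1 (hC b c) h

theorem apply_eq_zero_of_mem_of_notMem (hC : BlockDiag C) {s : Finset (Fin 3)} {b : idx pv}
    {c : idx nv} (hb : b.1 ∈ s) (hc : c.1 ∉ s) : C b c = 0 :=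
  hC b c (ne_of_mem_of_not_mem hb hc)

theorem subBB_mul (hC : BlockDiag C) (M : Matrix (idx nv) (idx v) ℝ) (s t : Finset (Fin 3)) :
    subBB (C * M) s t = subBB C s s * subBB M s t :=
  Matrix.ext fun a b => sum_eq_sum_ridx (f := fun c => C a.1 c * M c b.1) fun c hc =>
    mul_eq_zero_of_left (hC.apply_eq_zero_of_mem_of_notMem a.2 hc) (M c b.1)

theorem subCols_mul_transpose (hC : BlockDiag C) (M : Matrix (idx v) (idx nv) ℝ)
    (s : Finset (Fin 3)) : subCols (M * Cᵀ) s = subCols M s * (subBB C s s)ᵀ :=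
  Matrix.ext fun a b => sum_eq_sum_ridx (f := fun c => M a c * C b.1 c) fun c hc =>
    mul_eq_zero_of_right (M a c) (hC.apply_eq_zero_of_mem_of_notMem b.2 hc)

theorem subBB_mul_mul_transpose (hC : BlockDiag C) (P : Matrix (idx nv) (idx nv) ℝ)
    (s : Finset (Fin 3)) :
    subBB (C * P * Cᵀ) s s = subBB C s s * subBB P s s * (subBB C s s)ᵀ := by
  have hPC : subBB (P * Cᵀ) s s = subBB P s s * (subBB C s s)ᵀ :=
    Matrix.ext fun a => congrFun (congrFun (hC.subCols_mul_transpose P s) a.1)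
  rw [Matrix.mul_assoc, hC.subBB_mul, hPC, Matrix.mul_assoc]

end BlockDiag

theorem K1mat_apply_of_notMem {A : Matrix (idx nv) (idx nv) ℝ} {C : Matrix (idx pv) (idx nv) ℝ}
    {V : Matrix (idx pv) (idx pv) ℝ} {P : Matrix (idx nv) (idx nv) ℝ} {a : idx nv} {b : idx pv}
    (hb : b.1 ∉ Sset a.1) : K1mat A C V P a b = 0 :=
  dif_neg hb

/-- The normal equations that characterise the local gain among the gains whose `i`-th block row is
supported on `Sset i`. -/
theorem K1mat_mul_apply {A : Matrix (idx nv) (idx nv) ℝ} {C : Matrix (idx pv) (idx nv) ℝ}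
    {V : Matrix (idx pv) (idx pv) ℝ} {P : Matrix (idx nv) (idx nv) ℝ} (hC : BlockDiag C)
    (hposDef : (C * P * Cᵀ + V).PosDef) (a : idx nv) {b : idx pv} (hb : b.1 ∈ Sset a.1) :
    (K1mat A C V P * (C * P * Cᵀ + V)) a b = (A * P * Cᵀ) a b := by
  set S := Sset a.1
  set N := blockRow A a.1 * subCols P S * (subBB C S S)ᵀ with hN
  set R := subBB (C * P * Cᵀ + V) S S
  have hdet : IsUnit R.det :=
    (isUnit_iff_isUnit_det _).1 (hposDef.submatrix Subtype.val_injective).isUnit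
  have hlocal : subBB C S S * subBB P S S * (subBB C S S)ᵀ + subBB V S S = R := by
    rw [← hC.subBB_mul_mul_transpose]; rfl
  have hrow : ∀ c : ridx pv S, K1mat A C V P a c = (N * R⁻¹) a.2 c := fun c => by
    rw [K1mat, dif_pos c.2, hlocal]
  calc (K1mat A C V P * (C * P * Cᵀ + V)) a b
      = ∑ c : ridx pv S, K1mat A C V P a c * (C * P * Cᵀ + V) c b :=
        sum_eq_sum_ridx (f := fun c => K1mat A C V P a c * (C * P * Cᵀ + V) c b) fun c hc =>
          mul_eq_zero_of_left (K1mat_apply_of_notMem hc) ((C * P * Cᵀ + V) c b)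
    _ = (N * R⁻¹ * R) a.2 ⟨b, hb⟩ := Finset.sum_congr rfl fun c _ => by rw [hrow]; rfl
    _ = N a.2 ⟨b, hb⟩ := by rw [nonsing_inv_mul_cancel_right _ _ hdet]
    _ = (A * P * Cᵀ) a b := by
        rw [hN, Matrix.mul_assoc, ← hC.subCols_mul_transpose, Matrix.mul_assoc]; rfl

theorem self_mem_Sset (i : Fin 3) : i ∈ Sset i := by
  fin_cases i <;> decide

end LocalGain

section NoiseSpace

variable {Ω : Type*} {N : ℕ}

/-- The block sizes of the independent noise vectors: `nv` for the initial state and the process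
noises, `pv` for the measurement noises. -/
def noiseDim (nv pv : Fin 3 → ℕ) {N : ℕ} : Unit ⊕ Fin N ⊕ Fin N → Fin 3 → ℕ :=
  Sum.elim (fun _ => nv) (Sum.elim (fun _ => nv) fun _ => pv)

/-- The independent random vectors `x(0), w(0), …, w(N-1), v(0), …, v(N-1)` driving the system,
as one family. -/
def noise (N : ℕ) (x0 : Ω → idx nv → ℝ) (w : ℕ → Ω → idx nv → ℝ) (v : ℕ → Ω → idx pv → ℝ) :
    ∀ i : Unit ⊕ Fin N ⊕ Fin N, Ω → idx (noiseDim nv pv i) → ℝ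
  | .inl _ => x0
  | .inr (.inl k) => w k
  | .inr (.inr k) => v k

/-- The space spanned by the coordinates of the noise vectors. -/
def noiseSpace (N : ℕ) (x0 : Ω → idx nv → ℝ) (w : ℕ → Ω → idx nv → ℝ)
    (v : ℕ → Ω → idx pv → ℝ) : Submodule ℝ (Ω → ℝ) :=
  Submodule.span ℝ (Set.range fun (p : Σ i, idx (noiseDim nv pv i)) ω => noise N x0 w v p.1 ω p.2)

theorem noise_hasCoordsIn_noiseSpace {x0 : Ω → idx nv → ℝ} {w : ℕ → Ω → idx nv → ℝ}
    {v : ℕ → Ω → idx pv → ℝ} (i : Unit ⊕ Fin N ⊕ Fin N) :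
    HasCoordsIn (noiseSpace N x0 w v) (noise N x0 w v i) :=
  fun a => Submodule.subset_span ⟨⟨i, a⟩, rfl⟩

end NoiseSpace

section Noise

variable {μ : Measure Ω} {N : ℕ} {P0 W : Matrix (idx nv) (idx nv) ℝ}
  {V : Matrix (idx pv) (idx pv) ℝ} {x0 : Ω → idx nv → ℝ} {w : ℕ → Ω → idx nv → ℝ}
  {v : ℕ → Ω → idx pv → ℝ}

theorem IsGaussianVec.hasGaussianLaw {d : Type} [Fintype d] {X : Ω → d → ℝ}
    (h : IsGaussianVec μ X) (hX : Measurable X) : HasGaussianLaw X μ := by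
  classical
  refine ⟨isGaussian_of_map_eq_gaussianReal fun L => ?_⟩
  let c : d → ℝ := fun i => L fun j => if i = j then 1 else 0
  obtain ⟨m, s, hlaw⟩ := h c
  have hL : L ∘ X = fun ω => ∑ i, c i * X ω i := funext fun ω => by
    simpa only [smul_eq_mul, mul_comm] using! L.toLinearMap.pi_apply_eq_sum_univ (X ω)
  exact ⟨m, s, by rw [Measure.map_map (by fun_prop) hX, hL, hlaw]⟩

namespace NoiseOK

theorem measurable_noise (h : NoiseOK μ N P0 W V x0 w v) (i : Unit ⊕ Fin N ⊕ Fin N) :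
    Measurable (noise N x0 w v i) := by
  obtain ⟨hx0, hw, hv, -⟩ := h
  rcases i with _ | k | k
  exacts [hx0, hw k, hv k]

theorem hasGaussianLaw_noise (h : NoiseOK μ N P0 W V x0 w v) (i : Unit ⊕ Fin N ⊕ Fin N) :
    HasGaussianLaw (noise N x0 w v i) μ := by
  obtain ⟨hx0, hw, hv, -, hx0_gauss, hw_gauss, hv_gauss, -⟩ := h
  rcases i with _ | k | k
  exacts [hx0_gauss.hasGaussianLaw hx0, (hw_gauss k k.2).hasGaussianLaw (hw k),
    (hv_gauss k k.2).hasGaussianLaw (hv k)]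

theorem integral_noise (h : NoiseOK μ N P0 W V x0 w v) (i : Unit ⊕ Fin N ⊕ Fin N)
    (a : idx (noiseDim nv pv i)) : ∫ ω, noise N x0 w v i ω a ∂μ = 0 := by
  obtain ⟨-, -, -, -, -, -, -, hx0, -, hw, -, hv, -⟩ := h
  rcases i with _ | k | k
  exacts [hx0 a, hw k k.2 a, hv k k.2 a]

theorem iIndepFun_noise (h : NoiseOK μ N P0 W V x0 w v) : iIndepFun (noise N x0 w v) μ := by
  obtain ⟨-, -, -, hindep, -⟩ := h
  refine iIndep_of_iIndep_of_le hindep ?_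
  rintro (_ | _ | _) <;> exact le_rfl

theorem isCenteredGaussianSpace (h : NoiseOK μ N P0 W V x0 w v) :
    IsCenteredGaussianSpace μ (noiseSpace N x0 w v) :=
  isCenteredGaussianSpace_span
    (isGaussianProcess_sigma_of_iIndepFun h.hasGaussianLaw_noise h.iIndepFun_noise)
    (fun p => measurable_pi_iff.1 (h.measurable_noise p.1) p.2)
    fun p => h.integral_noise p.1 p.2

theorem memLp_noise (h : NoiseOK μ N P0 W V x0 w v) (i : Unit ⊕ Fin N ⊕ Fin N) :
    MemLp (noise N x0 w v i) 2 μ :=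
  h.isCenteredGaussianSpace.memLp_of_hasCoordsIn (noise_hasCoordsIn_noiseSpace i)

theorem crossCov_noise_of_ne [IsProbabilityMeasure μ] (h : NoiseOK μ N P0 W V x0 w v)
    {i j : Unit ⊕ Fin N ⊕ Fin N} (hij : i ≠ j) :
    crossCov μ (noise N x0 w v i) (noise N x0 w v j) = 0 :=
  Matrix.ext fun a b =>
    ((h.iIndepFun_noise.indepFun hij).comp (measurable_pi_apply a)
      (measurable_pi_apply b)).covariance_eq_zero
      (memLp_pi_iff.1 (h.memLp_noise i) a) (memLp_pi_iff.1 (h.memLp_noise j) b)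

theorem crossCov_noise_apply [IsProbabilityMeasure μ] (h : NoiseOK μ N P0 W V x0 w v)
    (i : Unit ⊕ Fin N ⊕ Fin N) (a b : idx (noiseDim nv pv i)) :
    crossCov μ (noise N x0 w v i) (noise N x0 w v i) a b =
      ∫ ω, noise N x0 w v i ω a * noise N x0 w v i ω b ∂μ := by
  rw [crossCov, covariance_eq_sub (memLp_pi_iff.1 (h.memLp_noise i) a)
    (memLp_pi_iff.1 (h.memLp_noise i) b), h.integral_noise, zero_mul, sub_zero]
  rfl

theorem crossCov_initial [IsProbabilityMeasure μ] (h : NoiseOK μ N P0 W V x0 w v) :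
    crossCov μ x0 x0 = P0 := by
  have ⟨_, _, _, _, _, _, _, _, hP0, _⟩ := h
  exact Matrix.ext fun a b => (h.crossCov_noise_apply (.inl ()) a b).trans (hP0 a b)

theorem crossCov_process [IsProbabilityMeasure μ] (h : NoiseOK μ N P0 W V x0 w v) (k : Fin N) :
    crossCov μ (w k) (w k) = W := by
  have ⟨_, _, _, _, _, _, _, _, _, _, hW, _⟩ := h
  exact Matrix.ext fun a b => (h.crossCov_noise_apply (.inr (.inl k)) a b).trans (hW k k.2 a b)

theorem crossCov_measurement [IsProbabilityMeasure μ] (h : NoiseOK μ N P0 W V x0 w v)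
    (k : Fin N) : crossCov μ (v k) (v k) = V := by
  have ⟨_, _, _, _, _, _, _, _, _, _, _, _, hV⟩ := h
  exact Matrix.ext fun a b => (h.crossCov_noise_apply (.inr (.inr k)) a b).trans (hV k k.2 a b)

end NoiseOK

end Noise

section PredictionError

variable {Ω : Type*} {N k : ℕ} {H : Submodule ℝ (Ω → ℝ)} {A : Matrix (idx nv) (idx nv) ℝ}
  {C : Matrix (idx pv) (idx nv) ℝ} {V : Matrix (idx pv) (idx pv) ℝ}
  {W P0 : Matrix (idx nv) (idx nv) ℝ} {x0 : Ω → idx nv → ℝ} {w : ℕ → Ω → idx nv → ℝ}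
  {v : ℕ → Ω → idx pv → ℝ}

/-- The error `x(k) - x̂(k|k-1)` of the Kalman predictor as a function of the noise alone: the
control enters the state and the predictor in the same way, see `ClosedLoop.sub_xpred`. -/
def predError (A : Matrix (idx nv) (idx nv) ℝ) (C : Matrix (idx pv) (idx nv) ℝ)
    (V : Matrix (idx pv) (idx pv) ℝ) (W P0 : Matrix (idx nv) (idx nv) ℝ)
    (x0 : Ω → idx nv → ℝ) (w : ℕ → Ω → idx nv → ℝ) (v : ℕ → Ω → idx pv → ℝ) :
    ℕ → Ω → idx nv → ℝ
  | 0 => x0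
  | k + 1 => nextError A (Kgain A C V (Pmat A C V W P0 k)) (predError A C V W P0 x0 w v k) (w k)
      (outputError C (predError A C V W P0 x0 w v k) (v k))

/-- The innovation `y(k) - C x̂(k|k-1)` as a function of the noise alone, see
`ClosedLoop.innov_eq`. -/
def predInnov (A : Matrix (idx nv) (idx nv) ℝ) (C : Matrix (idx pv) (idx nv) ℝ)
    (V : Matrix (idx pv) (idx pv) ℝ) (W P0 : Matrix (idx nv) (idx nv) ℝ)
    (x0 : Ω → idx nv → ℝ) (w : ℕ → Ω → idx nv → ℝ) (v : ℕ → Ω → idx pv → ℝ) (k : ℕ) :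
    Ω → idx pv → ℝ :=
  outputError C (predError A C V W P0 x0 w v k) (v k)

/-- The space `H` contains all the noise that acts before time `k`, including the initial state. -/
structure HasNoiseIn (H : Submodule ℝ (Ω → ℝ)) (k : ℕ) (x0 : Ω → idx nv → ℝ)
    (w : ℕ → Ω → idx nv → ℝ) (v : ℕ → Ω → idx pv → ℝ) : Prop where
  initial : HasCoordsIn H x0
  process : ∀ j < k, HasCoordsIn H (w j)
  measurement : ∀ j < k, HasCoordsIn H (v j)

theorem HasNoiseIn.predError (h : HasNoiseIn H k x0 w v) {j : ℕ} (hj : j ≤ k) :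
    HasCoordsIn H (predError A C V W P0 x0 w v j) := by
  induction j with
  | zero => exact h.initial
  | succ j ih =>
    have he := ih (Nat.le_of_succ_le hj)
    exact he.nextError (h.process j hj) (he.outputError (h.measurement j hj))

theorem HasNoiseIn.predInnov (h : HasNoiseIn H k x0 w v) {j : ℕ} (hj : j < k) :
    HasCoordsIn H (predInnov A C V W P0 x0 w v j) :=
  (h.predError hj.le).outputError (h.measurement j hj)

theorem hasNoiseIn_noiseSpace : HasNoiseIn (noiseSpace N x0 w v) N x0 w v where
  initial := noise_hasCoordsIn_noiseSpace (.inl ())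
  process j hj := noise_hasCoordsIn_noiseSpace (.inr (.inl ⟨j, hj⟩))
  measurement j hj := noise_hasCoordsIn_noiseSpace (.inr (.inr ⟨j, hj⟩))

end PredictionError

namespace NoiseOK

variable {μ : Measure Ω} {N k : ℕ} {P0 W : Matrix (idx nv) (idx nv) ℝ}
  {V : Matrix (idx pv) (idx pv) ℝ} {x0 : Ω → idx nv → ℝ} {w : ℕ → Ω → idx nv → ℝ}
  {v : ℕ → Ω → idx pv → ℝ} {A : Matrix (idx nv) (idx nv) ℝ} {C : Matrix (idx pv) (idx nv) ℝ}

local notation "𝐞" => predError A C V W P0 x0 w v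
local notation "𝐳" => predInnov A C V W P0 x0 w v

theorem memLp_predError (h : NoiseOK μ N P0 W V x0 w v) (hk : k ≤ N) : MemLp (𝐞 k) 2 μ :=
  h.isCenteredGaussianSpace.memLp_of_hasCoordsIn (hasNoiseIn_noiseSpace.predError hk)

theorem memLp_predInnov (h : NoiseOK μ N P0 W V x0 w v) (hk : k < N) : MemLp (𝐳 k) 2 μ :=
  h.isCenteredGaussianSpace.memLp_of_hasCoordsIn (hasNoiseIn_noiseSpace.predInnov hk)

variable [IsProbabilityMeasure μ]

theorem noise_hasCoordsIn_uncorrelatedSpace (h : NoiseOK μ N P0 W V x0 w v)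
    {i j : Unit ⊕ Fin N ⊕ Fin N} (hij : i ≠ j) :
    HasCoordsIn (uncorrelatedSpace (h.memLp_noise j)) (noise N x0 w v i) :=
  (hasCoordsIn_uncorrelatedSpace_iff _).2 ⟨h.memLp_noise i, h.crossCov_noise_of_ne hij⟩

theorem hasNoiseIn_uncorrelatedSpace (h : NoiseOK μ N P0 W V x0 w v) (i : Fin N ⊕ Fin N) :
    HasNoiseIn (uncorrelatedSpace (h.memLp_noise (.inr i))) (i.elim Fin.val Fin.val) x0 w v :=
  have hlt (j : ℕ) (hj : j < i.elim Fin.val Fin.val) : j < N := by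
    rcases i with i | i <;> exact lt_trans hj i.2
  { initial := h.noise_hasCoordsIn_uncorrelatedSpace (i := .inl ()) nofun
    process := fun j hj => h.noise_hasCoordsIn_uncorrelatedSpace
      (i := .inr (.inl ⟨j, hlt j hj⟩)) fun heq =>
        hj.ne (congrArg (Sum.elim Fin.val Fin.val) (Sum.inr_injective heq))
    measurement := fun j hj => h.noise_hasCoordsIn_uncorrelatedSpace
      (i := .inr (.inr ⟨j, hlt j hj⟩)) fun heq =>
        hj.ne (congrArg (Sum.elim Fin.val Fin.val) (Sum.inr_injective heq)) }

theorem isFilterStep_of_crossCov_predError (h : NoiseOK μ N P0 W V x0 w v) (hk : k < N)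
    {P : Matrix (idx nv) (idx nv) ℝ} (hP : crossCov μ (𝐞 k) (𝐞 k) = P) :
    IsFilterStep μ P W V (𝐞 k) (w k) (v k) :=
  have hw := h.hasNoiseIn_uncorrelatedSpace (.inl ⟨k, hk⟩)
  have hv := h.hasNoiseIn_uncorrelatedSpace (.inr ⟨k, hk⟩)
  { memLp_error := h.memLp_predError hk.le
    memLp_process := h.memLp_noise (.inr (.inl ⟨k, hk⟩))
    memLp_measurement := h.memLp_noise (.inr (.inr ⟨k, hk⟩))
    cov_error := hP
    cov_process := h.crossCov_process ⟨k, hk⟩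
    cov_measurement := h.crossCov_measurement ⟨k, hk⟩
    cov_error_process := ((hasCoordsIn_uncorrelatedSpace_iff _).1 (hw.predError le_rfl)).2
    cov_error_measurement := ((hasCoordsIn_uncorrelatedSpace_iff _).1 (hv.predError le_rfl)).2
    cov_process_measurement :=
      h.crossCov_noise_of_ne (i := .inr (.inl ⟨k, hk⟩)) (j := .inr (.inr ⟨k, hk⟩)) nofun }

theorem crossCov_predError (h : NoiseOK μ N P0 W V x0 w v) (hV : V.PosDef) (hk : k ≤ N) :
    crossCov μ (𝐞 k) (𝐞 k) = Pmat A C V W P0 k := by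
  induction k with
  | zero => exact h.crossCov_initial
  | succ k ih =>
    have hstep := h.isFilterStep_of_crossCov_predError hk (ih (Nat.le_of_succ_le hk))
    exact hstep.crossCov_nextError A C _ (hstep.crossCov_nextError_outputError_eq_zero A C hV)

theorem isFilterStep (h : NoiseOK μ N P0 W V x0 w v) (hV : V.PosDef) (hk : k < N) :
    IsFilterStep μ (Pmat A C V W P0 k) W V (𝐞 k) (w k) (v k) :=
  h.isFilterStep_of_crossCov_predError hk (h.crossCov_predError hV hk.le)

theorem crossCov_nextError_predInnov_of_crossCov_predError (h : NoiseOK μ N P0 W V x0 w v)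
    {j : ℕ} (hj : j < k) (hk : k < N) (horth : crossCov μ (𝐞 k) (𝐳 j) = 0)
    (K : Matrix (idx nv) (idx pv) ℝ) :
    crossCov μ (nextError A K (𝐞 k) (w k) (𝐳 k)) (𝐳 j) = 0 := by
  have hz : MemLp (𝐳 j) 2 μ := h.memLp_predInnov (hj.trans hk)
  have hw := h.hasNoiseIn_uncorrelatedSpace (.inl ⟨k, hk⟩)
  have hv := h.hasNoiseIn_uncorrelatedSpace (.inr ⟨k, hk⟩)
  have he : HasCoordsIn (uncorrelatedSpace hz) (𝐞 k) :=
    (hasCoordsIn_uncorrelatedSpace_iff hz).2 ⟨h.memLp_predError hk.le, horth⟩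
  have hw : HasCoordsIn (uncorrelatedSpace hz) (w k) :=
    (hasCoordsIn_uncorrelatedSpace_iff hz).2 ⟨h.memLp_noise (.inr (.inl ⟨k, hk⟩)),
      crossCov_eq_zero_symm ((hasCoordsIn_uncorrelatedSpace_iff _).1 (hw.predInnov hj)).2⟩
  have hv : HasCoordsIn (uncorrelatedSpace hz) (v k) :=
    (hasCoordsIn_uncorrelatedSpace_iff hz).2 ⟨h.memLp_noise (.inr (.inr ⟨k, hk⟩)),
      crossCov_eq_zero_symm ((hasCoordsIn_uncorrelatedSpace_iff _).1 (hv.predInnov hj)).2⟩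
  exact ((hasCoordsIn_uncorrelatedSpace_iff hz).1 (he.nextError hw (he.outputError hv))).2

theorem crossCov_predError_predInnov (h : NoiseOK μ N P0 W V x0 w v) (hV : V.PosDef) {j : ℕ}
    (hj : j < k) (hk : k ≤ N) : crossCov μ (𝐞 k) (𝐳 j) = 0 := by
  induction k, hj using Nat.le_induction with
  | base => exact (h.isFilterStep hV hk).crossCov_nextError_outputError_eq_zero A C hV
  | succ k hj ih =>
    exact h.crossCov_nextError_predInnov_of_crossCov_predError hj hk (ih (Nat.le_of_succ_le hk)) _

theorem crossCov_nextError_predInnov (h : NoiseOK μ N P0 W V x0 w v) (hV : V.PosDef) {j : ℕ}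
    (hj : j < k) (hk : k < N) (K : Matrix (idx nv) (idx pv) ℝ) :
    crossCov μ (nextError A K (𝐞 k) (w k) (𝐳 k)) (𝐳 j) = 0 :=
  h.crossCov_nextError_predInnov_of_crossCov_predError hj hk
    (h.crossCov_predError_predInnov hV hj hk.le) K

theorem crossCov_nextError_K1mat_apply (h : NoiseOK μ N P0 W V x0 w v) (hV : V.PosDef)
    (hC : BlockDiag C) (hk : k < N) (a : idx nv) {b : idx pv} (hb : b.1 ∈ Sset a.1) :
    crossCov μ (nextError A (K1mat A C V (Pmat A C V W P0 k)) (𝐞 k) (w k) (𝐳 k))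
      (𝐳 k) a b = 0 := by
  have hstep : IsFilterStep μ (Pmat A C V W P0 k) W V (𝐞 k) (w k) (v k) := h.isFilterStep hV hk
  rw [predInnov, hstep.crossCov_nextError_outputError, Matrix.sub_apply,
    K1mat_mul_apply hC (hstep.posDef_cov_outputError C hV) a hb, sub_self]

end NoiseOK

section LocalInformation

variable {Ω : Type} {y : ℕ → Ω → idx pv → ℝ} {i : Fin 3} {t : ℕ}

/-- The scalar observations that player `i` has at time `t + 1`: the blocks of `y(t)` in `Sset i`,
and all of `y(0), …, y(t-1)`. -/
def localObservation (y : ℕ → Ω → idx pv → ℝ) (i : Fin 3) (t : ℕ) :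
    ridx pv (Sset i) ⊕ Fin t × idx pv → Ω → ℝ :=
  Sum.elim (fun b ω => y t ω b) fun p ω => y p.1 ω p.2

theorem comap_le_iff_measurable_apply {d : Type*} {X : Ω → d → ℝ} {m : MeasurableSpace Ω} :
    .comap X inferInstance ≤ m ↔ ∀ a, Measurable[m] fun ω => X ω a :=
  measurable_iff_comap_le.symm.trans measurable_pi_iff

theorem localSigma_succ_eq_comap :
    localSigma y i (t + 1) = .comap (fun ω o => localObservation y i t o ω) inferInstance := by
  refine eq_of_forall_ge_iff fun m => ?_
  rw [comap_le_iff_measurable_apply, Sum.forall, localSigma, pastSigma, sup_le_iff, iSup₂_le_iff,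
    iSup₂_le_iff]
  simp only [comap_le_iff_measurable_apply, Finset.mem_range]
  exact and_congr ⟨fun h b => h b.1.1 b.2 b.1.2, fun h j hj b => h ⟨⟨j, b⟩, hj⟩⟩
    ⟨fun h p => h p.1 p.1.2 p.2, fun h j hj b => h (⟨j, hj⟩, b)⟩

end LocalInformation

namespace ClosedLoop

variable {Ω : Type} {H : Submodule ℝ (Ω → ℝ)} {A : Matrix (idx nv) (idx nv) ℝ}
  {B : Matrix (idx nv) (idx qv) ℝ} {C : Matrix (idx pv) (idx nv) ℝ}
  {V : Matrix (idx pv) (idx pv) ℝ} {W P0 : Matrix (idx nv) (idx nv) ℝ} {x0 : Ω → idx nv → ℝ}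
  {w : ℕ → Ω → idx nv → ℝ} {v : ℕ → Ω → idx pv → ℝ} {F G : ℕ → Matrix (idx qv) (idx pv) ℝ}
  {Φ : ℕ → ℕ → Matrix (idx qv) (idx pv) ℝ} {x : ℕ → Ω → idx nv → ℝ} {u : ℕ → Ω → idx qv → ℝ}
  {y : ℕ → Ω → idx pv → ℝ} {k : ℕ}

local notation "𝐞" => predError A C V W P0 x0 w v
local notation "𝐳" => predInnov A C V W P0 x0 w v
local notation "𝐱" => xpred A B C V W P0 u y

theorem innov_eq_of_sub_eq (h : ClosedLoop A B C x0 w v F G Φ x u y) {ω : Ω}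
    (hx : x k ω - 𝐱 k ω = 𝐞 k ω) : innov A B C V W P0 u y k ω = 𝐳 k ω := by
  obtain ⟨-, -, hy, -⟩ := h
  rw [innov, predInnov, outputError, hy, ← hx, mulVec_sub]
  abel

theorem succ_sub_eq_nextError (h : ClosedLoop A B C x0 w v F G Φ x u y) {ω : Ω}
    (hx : x k ω - 𝐱 k ω = 𝐞 k ω) (K : Matrix (idx nv) (idx pv) ℝ) :
    x (k + 1) ω - (A *ᵥ 𝐱 k ω + B *ᵥ u k ω + K *ᵥ innov A B C V W P0 u y k ω) =
      nextError A K (𝐞 k) (w k) (𝐳 k) ω := by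
  rw [h.innov_eq_of_sub_eq hx]
  obtain ⟨-, hstate, -, -⟩ := h
  rw [nextError, hstate, ← hx, mulVec_sub]
  abel

theorem sub_xpred (h : ClosedLoop A B C x0 w v F G Φ x u y) (k : ℕ) (ω : Ω) :
    x k ω - 𝐱 k ω = 𝐞 k ω := by
  induction k with
  | zero => exact (sub_zero (x 0 ω)).trans (h.1 ω)
  | succ k ih => exact h.succ_sub_eq_nextError ih _

theorem innov_eq (h : ClosedLoop A B C x0 w v F G Φ x u y) (k : ℕ) (ω : Ω) :
    innov A B C V W P0 u y k ω = 𝐳 k ω :=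
  h.innov_eq_of_sub_eq (h.sub_xpred k ω)

theorem sub_xh1_succ (h : ClosedLoop A B C x0 w v F G Φ x u y) (k : ℕ) (ω : Ω) :
    x (k + 1) ω - xh1 A B C V W P0 u y (k + 1) ω =
      nextError A (K1mat A C V (Pmat A C V W P0 k)) (𝐞 k) (w k) (𝐳 k) ω :=
  h.succ_sub_eq_nextError (h.sub_xpred k ω) _

/-- The part `G(k) y(k-1) + f_k(y(0), …, y(k-2))` of the control that only uses past
observations. -/
def delayedControl (G : ℕ → Matrix (idx qv) (idx pv) ℝ)
    (Φ : ℕ → ℕ → Matrix (idx qv) (idx pv) ℝ) (y : ℕ → Ω → idx pv → ℝ) (k : ℕ) :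
    Ω → idx qv → ℝ :=
  fun ω => (if 1 ≤ k then G k *ᵥ y (k - 1) ω else 0) +
    ∑ j ∈ Finset.range (k - 1), Φ k j *ᵥ y j ω

theorem control_eq (h : ClosedLoop A B C x0 w v F G Φ x u y) (k : ℕ) :
    u k = fun ω => F k *ᵥ y k ω + delayedControl G Φ y k ω := by
  obtain ⟨-, -, -, hu⟩ := h
  exact funext fun ω => (hu k ω).trans (add_assoc _ _ _)

theorem delayedControl_hasCoordsIn (hy : ∀ j < k, HasCoordsIn H (y j)) :
    HasCoordsIn H (delayedControl G Φ y k) := by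
  refine .add ?_ (.sum fun j hj => (hy j ?_).mulVec _)
  · split_ifs with hk
    · exact (hy (k - 1) (Nat.sub_one_lt_of_lt hk)).mulVec _
    · exact .zero
  · exact (Finset.mem_range.1 hj).trans_le (Nat.sub_le k 1)

theorem control_hasCoordsIn (h : ClosedLoop A B C x0 w v F G Φ x u y)
    (hy : ∀ j ≤ k, HasCoordsIn H (y j)) : HasCoordsIn H (u k) := by
  rw [h.control_eq]
  exact ((hy k le_rfl).mulVec _).add (delayedControl_hasCoordsIn fun j hj => hy j hj.le)

theorem xpred_hasCoordsIn (h : ClosedLoop A B C x0 w v F G Φ x u y)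
    (hy : ∀ j < k, HasCoordsIn H (y j)) : HasCoordsIn H (𝐱 k) := by
  induction k with
  | zero => exact .zero
  | succ k ih =>
    have hx := ih fun j hj => hy j (hj.trans k.lt_succ_self)
    have hu := h.control_hasCoordsIn fun j hj => hy j (Nat.lt_succ_of_le hj)
    exact ((hx.mulVec A).add (hu.mulVec B)).add
      (((hy k k.lt_succ_self).sub (hx.mulVec C)).mulVec _)

theorem observation_apply_mem (h : ClosedLoop A B C x0 w v F G Φ x u y)
    (hy : ∀ j < k, HasCoordsIn H (y j)) {b : idx pv} (hz : (fun ω => 𝐳 k ω b) ∈ H) :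
    (fun ω => y k ω b) ∈ H := by
  have hCx := ((h.xpred_hasCoordsIn (V := V) (W := W) (P0 := P0) hy).mulVec C) b
  convert H.add_mem hCx hz using 1
  ext ω
  simp [← h.innov_eq, innov]

theorem observation_hasCoordsIn (h : ClosedLoop A B C x0 w v F G Φ x u y)
    (hz : ∀ j < k, HasCoordsIn H (𝐳 j)) {j : ℕ} (hj : j < k) : HasCoordsIn H (y j) := by
  induction j using Nat.strong_induction_on with
  | h j ih => exact fun b => h.observation_apply_mem (fun l hl => ih l hl (hl.trans hj)) (hz j hj b)

theorem localObservation_mem (h : ClosedLoop A B C x0 w v F G Φ x u y) {i : Fin 3}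
    (hz : ∀ j < k, HasCoordsIn H (𝐳 j)) (hzk : ∀ b, b.1 ∈ Sset i → (fun ω => 𝐳 k ω b) ∈ H)
    (o : ridx pv (Sset i) ⊕ Fin k × idx pv) : localObservation y i k o ∈ H := by
  have hy : ∀ j < k, HasCoordsIn H (y j) := fun j => h.observation_hasCoordsIn hz
  rcases o with ⟨b, hb⟩ | ⟨j, b⟩
  exacts [h.observation_apply_mem hy (hzk b hb), hy j j.2 b]

/-- Sparsity makes the local estimate computable from the local observations: `B` and `F` are block
diagonal, so the only current observation entering block `i` of the control is `y_i(k)`. -/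
theorem xh1_succ_apply_mem (h : ClosedLoop A B C x0 w v F G Φ x u y) (hB : BlockDiag B)
    (hF : BlockDiag (F k)) {i : Fin 3} (hobs : ∀ o, localObservation y i k o ∈ H)
    (a : Fin (nv i)) :
    (fun ω => xh1 A B C V W P0 u y (k + 1) ω ⟨i, a⟩) ∈ H := by
  have hpast : ∀ j < k, HasCoordsIn H (y j) := fun j hj b => hobs (.inr (⟨j, hj⟩, b))
  have hcurrent : ∀ b, b.1 ∈ Sset i → (fun ω => y k ω b) ∈ H := fun b hb => hobs (.inl ⟨b, hb⟩)
  have hx : HasCoordsIn H (𝐱 k) := h.xpred_hasCoordsIn hpast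
  have hu : ∀ c, c.1 = i → (fun ω => u k ω c) ∈ H := fun c hc => by
    rw [h.control_eq]
    refine H.add_mem (HasCoordsIn.mulVec_apply fun b hb => hcurrent b ?_)
      (delayedControl_hasCoordsIn hpast c)
    rw [← hF.fst_eq_of_apply_ne_zero hb, hc]
    exact self_mem_Sset i
  have hBu : (fun ω => (B *ᵥ u k ω) ⟨i, a⟩) ∈ H :=
    HasCoordsIn.mulVec_apply fun c hc => hu c (hB.fst_eq_of_apply_ne_zero hc).symm
  have hK : (fun ω => (K1mat A C V (Pmat A C V W P0 k) *ᵥ innov A B C V W P0 u y k ω) ⟨i, a⟩) ∈ H :=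
    HasCoordsIn.mulVec_apply fun b hb =>
      have hbS : b.1 ∈ Sset i := not_imp_comm.1 (K1mat_apply_of_notMem (a := ⟨i, a⟩)) hb
      H.sub_mem (hcurrent b hbS) (hx.mulVec C b)
  exact H.add_mem (H.add_mem (hx.mulVec A _) hBu) hK

theorem measurable_xh1_succ_apply (h : ClosedLoop A B C x0 w v F G Φ x u y) (hB : BlockDiag B)
    (hF : BlockDiag (F k)) {i : Fin 3} (a : Fin (nv i)) :
    Measurable[localSigma y i (k + 1)] fun ω => xh1 A B C V W P0 u y (k + 1) ω ⟨i, a⟩ :=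
  h.xh1_succ_apply_mem (H := measurableFunctions (localSigma y i (k + 1))) hB hF
    (comap_le_iff_measurable_apply.1 localSigma_succ_eq_comap.ge) a

theorem sub_xh1_succ_hasCoordsIn_noiseSpace (h : ClosedLoop A B C x0 w v F G Φ x u y) {N : ℕ}
    (hk : k < N) : HasCoordsIn (noiseSpace N x0 w v)
      fun ω => x (k + 1) ω - xh1 A B C V W P0 u y (k + 1) ω := by
  have hnoise : HasNoiseIn (noiseSpace N x0 w v) N x0 w v := hasNoiseIn_noiseSpace
  simp only [h.sub_xh1_succ]
  exact (hnoise.predError hk.le).nextError (hnoise.process k hk) (hnoise.predInnov hk)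

section LocalError

variable [MeasurableSpace Ω] {μ : Measure Ω} [IsProbabilityMeasure μ] {N : ℕ}

theorem crossCov_sub_xh1_succ_predInnov (h : ClosedLoop A B C x0 w v F G Φ x u y)
    (hnoise : NoiseOK μ N P0 W V x0 w v) (hV : V.PosDef) {j : ℕ} (hj : j < k) (hk : k < N) :
    crossCov μ (fun ω => x (k + 1) ω - xh1 A B C V W P0 u y (k + 1) ω) (𝐳 j) = 0 := by
  simp only [h.sub_xh1_succ]
  exact hnoise.crossCov_nextError_predInnov hV hj hk _

theorem crossCov_sub_xh1_succ_predInnov_apply (h : ClosedLoop A B C x0 w v F G Φ x u y)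
    (hnoise : NoiseOK μ N P0 W V x0 w v) (hV : V.PosDef) (hC : BlockDiag C) (hk : k < N)
    (a : idx nv) {b : idx pv} (hb : b.1 ∈ Sset a.1) :
    crossCov μ (fun ω => x (k + 1) ω - xh1 A B C V W P0 u y (k + 1) ω) (𝐳 k) a b = 0 := by
  simp only [h.sub_xh1_succ]
  exact hnoise.crossCov_nextError_K1mat_apply hV hC hk a hb

theorem covariance_sub_xh1_succ_localObservation (h : ClosedLoop A B C x0 w v F G Φ x u y)
    (hnoise : NoiseOK μ N P0 W V x0 w v) (hV : V.PosDef) (hC : BlockDiag C) (hk : k < N)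
    {i : Fin 3} (a : Fin (nv i)) (o : ridx pv (Sset i) ⊕ Fin k × idx pv) :
    cov[fun ω => x (k + 1) ω ⟨i, a⟩ - xh1 A B C V W P0 u y (k + 1) ω ⟨i, a⟩,
      localObservation y i k o; μ] = 0 := by
  let residual : Ω → Unit → ℝ := fun ω _ =>
    x (k + 1) ω ⟨i, a⟩ - xh1 A B C V W P0 u y (k + 1) ω ⟨i, a⟩
  have hresidual : MemLp residual 2 μ := hnoise.isCenteredGaussianSpace.memLp_of_hasCoordsIn
    fun _ => h.sub_xh1_succ_hasCoordsIn_noiseSpace hk ⟨i, a⟩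
  have hmemLp {j : ℕ} (hj : j < N) (b : idx pv) : MemLp (fun ω => 𝐳 j ω b) 2 μ :=
    memLp_pi_iff.1 (hnoise.memLp_predInnov hj) b
  have hpast : ∀ j < k, HasCoordsIn (uncorrelatedSpace hresidual) (𝐳 j) := fun j hj b =>
    ⟨hmemLp (hj.trans hk) b, fun _ => (covariance_comm _ _).trans
      (congrFun₂ (h.crossCov_sub_xh1_succ_predInnov hnoise hV hj hk) ⟨i, a⟩ b)⟩
  have hcurrent : ∀ b, b.1 ∈ Sset i → (fun ω => 𝐳 k ω b) ∈ uncorrelatedSpace hresidual :=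
    fun b hb => ⟨hmemLp hk b, fun _ => (covariance_comm _ _).trans
      (h.crossCov_sub_xh1_succ_predInnov_apply hnoise hV hC hk ⟨i, a⟩ hb)⟩
  exact (covariance_comm _ _).trans ((h.localObservation_mem hpast hcurrent o).2 ())

end LocalError

end ClosedLoop

theorem stmt1_general {nv qv pv : Fin 3 → ℕ} {Ω : Type} [MeasurableSpace Ω] {μ : Measure Ω}
    [IsProbabilityMeasure μ] {N : ℕ} {A : Matrix (idx nv) (idx nv) ℝ}
    {B : Matrix (idx nv) (idx qv) ℝ} {C : Matrix (idx pv) (idx nv) ℝ} (hB : BlockDiag B)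
    (hC : BlockDiag C) {P0 W : Matrix (idx nv) (idx nv) ℝ} {V : Matrix (idx pv) (idx pv) ℝ}
    (hV : V.PosDef) {x0 : Ω → idx nv → ℝ} {w : ℕ → Ω → idx nv → ℝ} {v : ℕ → Ω → idx pv → ℝ}
    (hnoise : NoiseOK μ N P0 W V x0 w v) {F G : ℕ → Matrix (idx qv) (idx pv) ℝ}
    {Φ : ℕ → ℕ → Matrix (idx qv) (idx pv) ℝ} (hF : ∀ k, BlockDiag (F k))
    {x : ℕ → Ω → idx nv → ℝ} {u : ℕ → Ω → idx qv → ℝ} {y : ℕ → Ω → idx pv → ℝ}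
    (hcl : ClosedLoop A B C x0 w v F G Φ x u y) {k : ℕ} (hk : 1 ≤ k) (hkN : k ≤ N) {i : Fin 3}
    (a : Fin (nv i)) :
    μ[fun ω => x k ω ⟨i, a⟩ | localSigma y i k] =ᵐ[μ]
      fun ω => xh1 A B C V W P0 u y k ω ⟨i, a⟩ := by
  obtain ⟨t, rfl⟩ := Nat.exists_eq_add_of_le' hk
  set H := noiseSpace N x0 w v
  have hz {j : ℕ} (hj : j < N) : HasCoordsIn H (predInnov A C V W P0 x0 w v j) :=
    hasNoiseIn_noiseSpace.predInnov hj
  have hobs : ∀ o, localObservation y i t o ∈ H :=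
    hcl.localObservation_mem (fun _ hj => hz (hj.trans hkN)) fun b _ => hz hkN b
  have hestimate : (fun ω => xh1 A B C V W P0 u y (t + 1) ω ⟨i, a⟩) ∈ H :=
    hcl.xh1_succ_apply_mem hB (hF t) hobs a
  have hstate : (fun ω => x (t + 1) ω ⟨i, a⟩) ∈ H := (H.sub_mem_iff_left hestimate).1
    (hcl.sub_xh1_succ_hasCoordsIn_noiseSpace hkN ⟨i, a⟩)
  have hmeas : Measurable[localSigma y i (t + 1)]
      fun ω => xh1 A B C V W P0 u y (t + 1) ω ⟨i, a⟩ := hcl.measurable_xh1_succ_apply hB (hF t) a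
  rw [localSigma_succ_eq_comap] at hmeas ⊢
  exact hnoise.isCenteredGaussianSpace.condExp_ae_eq hstate hestimate hobs hmeas
    (hcl.covariance_sub_xh1_succ_localObservation hnoise hV hC hkN a)

/-- for every `k ≥ 1` and every player `i`, the conditional expectation
`E[xᵢ(k) | I¹ᵢ(k)]` equals the `i`-th block of
`x̂¹(k) = A x̂(k−1|k−2) + B u(k−1) + K¹(k−1)(y(k−1) − C x̂(k−1|k−2))` almost surely. -/
theorem stmt1 {nv qv pv : Fin 3 → ℕ} {Ω : Type} [MeasurableSpace Ω]
    (μ : Measure Ω) [IsProbabilityMeasure μ] (N : ℕ)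
    (A : Matrix (idx nv) (idx nv) ℝ) (B : Matrix (idx nv) (idx qv) ℝ)
    (C : Matrix (idx pv) (idx nv) ℝ)
    (hA : CyclicSparse A) (hB : BlockDiag B) (hC : BlockDiag C)
    (P0 W : Matrix (idx nv) (idx nv) ℝ) (V : Matrix (idx pv) (idx pv) ℝ)
    (hV : V.PosDef)
    (x0 : Ω → idx nv → ℝ) (w : ℕ → Ω → idx nv → ℝ) (v : ℕ → Ω → idx pv → ℝ)
    (hnoise : NoiseOK μ N P0 W V x0 w v)
    (F G : ℕ → Matrix (idx qv) (idx pv) ℝ) (Φ : ℕ → ℕ → Matrix (idx qv) (idx pv) ℝ)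
    (hadm : Admissible F G)
    (x : ℕ → Ω → idx nv → ℝ) (u : ℕ → Ω → idx qv → ℝ) (y : ℕ → Ω → idx pv → ℝ)
    (hcl : ClosedLoop A B C x0 w v F G Φ x u y) :
    ∀ k, 1 ≤ k → k ≤ N → ∀ (i : Fin 3) (a : Fin (nv i)),
      (μ[fun ω => x k ω ⟨i, a⟩ | localSigma y i k]) =ᵐ[μ]
        fun ω => xh1 A B C V W P0 u y k ω ⟨i, a⟩ := by
  intro k hk hkN i a
  exact stmt1_general hB hC hV hnoise hadm.1 hcl hk hkN a

end
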